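/- Let X and Y be standard Borel spaces and let P and Q be probability measures on X × Y. Denote by P_Y, Q_Y the marginals on Y, and by P(·|y), Q(·|y) the conditional distributions on X given y. Then √(D_JS(P‖Q)) ≤ √( ∫_Y D_JS(P(·|y)‖Q(·|y)) dP_Y(y) + ∫_Y D_JS(P(·|y)‖Q(·|y)) dQ_Y(y) ) + √(D_JS(P_Y‖Q_Y)). -/

import Mathlib

open MeasureTheory ProbabilityTheory
open scoped ENNReal Classical

/-- Kullback–Leibler divergence between two measures, with values in `[0, ∞]`. -/
noncomputable def klDiv {Z : Type*} [MeasurableSpace Z] (μ ν : Measure Z) : ℝ≥0∞ :=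
  if μ ≪ ν ∧ Integrable (llr μ ν) μ then ENNReal.ofReal (∫ z, llr μ ν z ∂μ) else ⊤

/-- Jensen–Shannon divergence: `D_JS(P‖Q) = (1/2)[D_KL(P‖M) + D_KL(Q‖M)]`
where `M = (1/2)(P + Q)`. -/
noncomputable def jsDiv {Z : Type*} [MeasurableSpace Z] (μ ν : Measure Z) : ℝ≥0∞ :=
  (klDiv μ ((2 : ℝ≥0∞)⁻¹ • (μ + ν)) + klDiv ν ((2 : ℝ≥0∞)⁻¹ • (μ + ν))) / 2

/-!
Let `B` be a fair coin and let `Z` have law `μ` or `ν` according to `B`. Then `D_JS(μ‖ν)` is the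
mutual information `I(B; Z)`. Computing `D(law (B, Z) ‖ law B ⊗ ρ)` with the chain rule in both
orders of the factors gives the compensation identity, so the midpoint of `μ` and `ν` minimizes
`ρ ↦ D(μ‖ρ) + D(ν‖ρ)`. For `P` and `Q` on the product, we do not use their own midpoint, whose
conditionals are unequal mixtures, but the measure `ρ` with marginal `(P_Y + Q_Y) / 2` and
conditionals `(P(·|y) + Q(·|y)) / 2`. The chain rule splits `D(P‖ρ)` and `D(Q‖ρ)`, and
`D(P(·|y) ‖ (P(·|y) + Q(·|y)) / 2) ≤ 2 D_JS(P(·|y)‖Q(·|y))` bounds the conditional terms.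
-/

lemma sqrt_add_le_sqrt_add_sqrt (a b : ℝ) : √(a + b) ≤ √a + √b := by
  have ha : a ≤ √a ^ 2 := Real.sq_sqrt' ▸ le_max_left a 0
  have hb : b ≤ √b ^ 2 := Real.sq_sqrt' ▸ le_max_left b 0
  have hab : 0 ≤ √a * √b := by positivity
  exact Real.sqrt_le_iff.2 ⟨by positivity, by linarith [add_sq √a √b]⟩

section KullbackLeibler

variable {α β : Type*} [MeasurableSpace α] [MeasurableSpace β]

lemma rnDeriv_le_of_le_smul {μ ν : Measure α} [SigmaFinite ν] {c : ℝ≥0∞} (h : μ ≤ c • ν) :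
    ∀ᵐ x ∂ν, μ.rnDeriv ν x ≤ c := by
  refine ae_le_of_forall_setLIntegral_le_of_sigmaFinite (μ.measurable_rnDeriv ν) fun s _ _ ↦ ?_
  calc ∫⁻ x in s, μ.rnDeriv ν x ∂ν ≤ μ s := Measure.setLIntegral_rnDeriv_le s
    _ ≤ c * ν s := h s
    _ = ∫⁻ _ in s, c ∂ν := (setLIntegral_const s c).symm

lemma integrable_llr_of_le_smul {μ ν : Measure α} [IsFiniteMeasure μ] [IsFiniteMeasure ν]
    {c : ℝ≥0∞} (hc : c ≠ ∞) (h : μ ≤ c • ν) : Integrable (llr μ ν) μ := by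
  rw [← InformationTheory.integrable_klFun_rnDeriv_iff (Measure.absolutelyContinuous_of_le_smul h)]
  obtain ⟨C, hC⟩ := (isCompact_Icc (a := 0) (b := c.toReal)).exists_bound_of_continuousOn
    InformationTheory.continuous_klFun.continuousOn
  refine .of_bound (Measurable.aestronglyMeasurable (by fun_prop)) C ?_
  filter_upwards [rnDeriv_le_of_le_smul h] with x hx
  exact hC _ ⟨ENNReal.toReal_nonneg, ENNReal.toReal_mono hc hx⟩

lemma klDiv_le_log_of_le_smul {μ ν : Measure α} [IsProbabilityMeasure μ] [IsProbabilityMeasure ν]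
    {c : ℝ≥0∞} (hc : c ≠ ∞) (h : μ ≤ c • ν) :
    InformationTheory.klDiv μ ν ≤ ENNReal.ofReal (Real.log c.toReal) := by
  have hac : μ ≪ ν := Measure.absolutelyContinuous_of_le_smul h
  have hint : Integrable (llr μ ν) μ := integrable_llr_of_le_smul hc h
  have hllr : llr μ ν ≤ᵐ[μ] fun _ ↦ Real.log c.toReal := by
    filter_upwards [hac.ae_le (rnDeriv_le_of_le_smul h), Measure.rnDeriv_pos hac] with x hle hpos
    exact Real.log_le_log (ENNReal.toReal_pos hpos.ne' (ne_top_of_le_ne_top hc hle))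
      (ENNReal.toReal_mono hc hle)
  rw [InformationTheory.klDiv_of_ac_of_integrable hac hint]
  refine ENNReal.ofReal_le_ofReal ?_
  simpa using integral_mono_ae hint (integrable_const _) hllr

lemma klDiv_map_measurableEquiv (μ ν : Measure α) [IsFiniteMeasure μ] [IsFiniteMeasure ν]
    (e : α ≃ᵐ β) :
    InformationTheory.klDiv (μ.map e) (ν.map e) = InformationTheory.klDiv μ ν := by
  refine le_antisymm (InformationTheory.klDiv_map_le μ ν e.measurable) ?_
  simpa using InformationTheory.klDiv_map_le (μ.map e) (ν.map e) e.symm.measurable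

section CondDiv

variable [MeasurableSpace.CountableOrCountablyGenerated α β] (μ : Measure α) [IsFiniteMeasure μ]
  (κ η : Kernel α β) [IsFiniteKernel κ] [IsFiniteKernel η]

lemma rnDeriv_compProd_right :
    (μ ⊗ₘ κ).rnDeriv (μ ⊗ₘ η) =ᵐ[μ ⊗ₘ η] fun p ↦ κ.rnDeriv η p.1 p.2 := by
  have hmeas : Measurable fun p : α × β ↦ κ.rnDeriv η p.1 p.2 := κ.measurable_rnDeriv η
  refine (Measure.eq_rnDeriv hmeas (s := μ ⊗ₘ κ.singularPart η) ?_ ?_).symm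
  · exact Measure.MutuallySingular.compProd_of_right μ μ
      (.of_forall fun a ↦ Kernel.mutuallySingular_singularPart κ η a)
  · rw [← Measure.compProd_withDensity hmeas, ← Measure.compProd_add_right, add_comm,
      Kernel.rnDeriv_add_singularPart]

lemma klDiv_compProd_right :
    InformationTheory.klDiv (μ ⊗ₘ κ) (μ ⊗ₘ η) = ∫⁻ a, InformationTheory.klDiv (κ a) (η a) ∂μ := by
  by_cases hac : ∀ᵐ a ∂μ, κ a ≪ η a
  · calc InformationTheory.klDiv (μ ⊗ₘ κ) (μ ⊗ₘ η)
      _ = ∫⁻ p, ENNReal.ofReal (InformationTheory.klFun (κ.rnDeriv η p.1 p.2).toReal)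
            ∂(μ ⊗ₘ η) := by
          rw [InformationTheory.klDiv_eq_lintegral_klFun_of_ac
            (Measure.AbsolutelyContinuous.compProd_right hac)]
          refine lintegral_congr_ae ?_
          filter_upwards [rnDeriv_compProd_right μ κ η] with p hp
          rw [hp]
      _ = ∫⁻ a, ∫⁻ b, ENNReal.ofReal (InformationTheory.klFun (κ.rnDeriv η a b).toReal)
            ∂(η a) ∂μ := Measure.lintegral_compProd (by fun_prop)
      _ = ∫⁻ a, InformationTheory.klDiv (κ a) (η a) ∂μ := by
          refine lintegral_congr_ae ?_
          filter_upwards [hac] with a ha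
          rw [InformationTheory.klDiv_eq_lintegral_klFun_of_ac ha]
          refine lintegral_congr_ae ?_
          filter_upwards [Kernel.rnDeriv_eq_rnDeriv_measure (κ := κ) (η := η) (a := a)] with b hb
          rw [hb]
  · have hs : MeasurableSet {a | ¬ κ a ≪ η a} :=
      (Kernel.measurableSet_absolutelyContinuous κ η).compl
    rw [InformationTheory.klDiv_of_not_ac
      (Measure.absolutelyContinuous_compProd_right_iff.not.2 hac), eq_comm, eq_top_iff]
    calc ∞ = ∫⁻ _ in {a | ¬ κ a ≪ η a}, ∞ ∂μ := by
          rw [setLIntegral_const, ENNReal.top_mul (mt ae_iff.2 hac)]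
      _ = ∫⁻ a in {a | ¬ κ a ≪ η a}, InformationTheory.klDiv (κ a) (η a) ∂μ :=
          setLIntegral_congr_fun hs fun a ha ↦ (InformationTheory.klDiv_of_not_ac ha).symm
      _ ≤ ∫⁻ a, InformationTheory.klDiv (κ a) (η a) ∂μ := setLIntegral_le_lintegral _ _

end CondDiv

section Compensation

variable [StandardBorelSpace α] (μ : Measure α) [IsProbabilityMeasure μ] (κ : Kernel α β)
  [IsFiniteKernel κ] (ν : Measure β) [IsFiniteMeasure ν]

lemma klDiv_compProd_prod_eq_add :
    InformationTheory.klDiv (μ ⊗ₘ κ) (μ.prod ν) =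
      InformationTheory.klDiv (κ ∘ₘ μ) ν +
        InformationTheory.klDiv (μ ⊗ₘ κ) (μ.prod (κ ∘ₘ μ)) := by
  have : Nonempty α := nonempty_of_isProbabilityMeasure μ
  have hswap (ρ : Measure β) [IsFiniteMeasure ρ] :
      InformationTheory.klDiv (μ ⊗ₘ κ) (μ.prod ρ) =
        InformationTheory.klDiv ((κ ∘ₘ μ) ⊗ₘ κ†μ) (ρ ⊗ₘ Kernel.const β μ) := by
    rw [compProd_posterior_eq_map_swap, Measure.compProd_const,
      ← Measure.prod_swap (μ := μ) (ν := ρ)]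
    exact (klDiv_map_measurableEquiv (μ ⊗ₘ κ) (μ.prod ρ) MeasurableEquiv.prodComm).symm
  rw [hswap ν, hswap (κ ∘ₘ μ), InformationTheory.klDiv_compProd_eq_add]

lemma lintegral_klDiv_eq_klDiv_comp_add [MeasurableSpace.CountableOrCountablyGenerated α β] :
    ∫⁻ a, InformationTheory.klDiv (κ a) ν ∂μ =
      InformationTheory.klDiv (κ ∘ₘ μ) ν +
        ∫⁻ a, InformationTheory.klDiv (κ a) (κ ∘ₘ μ) ∂μ := by
  have hconst (ρ : Measure β) [IsFiniteMeasure ρ] :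
      ∫⁻ a, InformationTheory.klDiv (κ a) ρ ∂μ = InformationTheory.klDiv (μ ⊗ₘ κ) (μ.prod ρ) := by
    rw [← Measure.compProd_const, klDiv_compProd_right]
    rfl
  rw [hconst ν, hconst (κ ∘ₘ μ), klDiv_compProd_prod_eq_add]

end Compensation

end KullbackLeibler

section Midpoint

variable {α β : Type*} [MeasurableSpace α] [MeasurableSpace β]

/-- The equal-weight mixture `M = (μ + ν) / 2` of two measures, the reference measure in the
Jensen–Shannon divergence. -/
noncomputable def midMeasure (μ ν : Measure α) : Measure α := (2 : ℝ≥0∞)⁻¹ • (μ + ν)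

lemma midMeasure_comm (μ ν : Measure α) : midMeasure μ ν = midMeasure ν μ := by
  rw [midMeasure, midMeasure, add_comm]

instance (μ ν : Measure α) [IsProbabilityMeasure μ] [IsProbabilityMeasure ν] :
    IsProbabilityMeasure (midMeasure μ ν) where
  measure_univ := by
    simp only [midMeasure, Measure.smul_apply, Measure.add_apply, measure_univ, smul_eq_mul,
      one_add_one_eq_two]
    exact ENNReal.inv_mul_cancel two_ne_zero ENNReal.ofNat_ne_top

lemma le_two_smul_midMeasure_left (μ ν : Measure α) : μ ≤ (2 : ℝ≥0∞) • midMeasure μ ν := by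
  rw [midMeasure, smul_smul, ENNReal.mul_inv_cancel two_ne_zero ENNReal.ofNat_ne_top, one_smul]
  exact Measure.le_add_right le_rfl

lemma lintegral_midMeasure (μ ν : Measure α) (f : α → ℝ≥0∞) :
    ∫⁻ x, f x ∂(midMeasure μ ν) = (∫⁻ x, f x ∂μ + ∫⁻ x, f x ∂ν) / 2 := by
  rw [midMeasure, lintegral_smul_measure, lintegral_add_measure, smul_eq_mul, mul_comm,
    div_eq_mul_inv]

lemma map_midMeasure (μ ν : Measure α) {f : α → β} (hf : Measurable f) :
    (midMeasure μ ν).map f = midMeasure (μ.map f) (ν.map f) := by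
  rw [midMeasure, midMeasure, Measure.map_smul, Measure.map_add _ _ hf]

lemma boolKernel_comp_midMeasure_dirac (μ ν : Measure α) :
    Kernel.boolKernel μ ν ∘ₘ midMeasure (.dirac false) (.dirac true) = midMeasure μ ν := by
  rw [boolKernel_comp_measure, midMeasure_comm μ]
  simp [midMeasure]

/-- The kernel `a ↦ (κ a + η a) / 2`, the pointwise analogue of `midMeasure`. -/
noncomputable def midKernel (κ η : Kernel α β) : Kernel α β where
  toFun a := midMeasure (κ a) (η a)
  measurable' := by
    refine Measure.measurable_of_measurable_coe _ fun s hs ↦ ?_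
    simp only [midMeasure, Measure.smul_apply, Measure.add_apply, smul_eq_mul]
    exact ((κ.measurable_coe hs).add (η.measurable_coe hs)).const_mul _

lemma midKernel_apply (κ η : Kernel α β) (a : α) :
    midKernel κ η a = midMeasure (κ a) (η a) := rfl

lemma midKernel_comm (κ η : Kernel α β) : midKernel κ η = midKernel η κ :=
  Kernel.ext fun a ↦ midMeasure_comm (κ a) (η a)

instance (κ η : Kernel α β) [IsMarkovKernel κ] [IsMarkovKernel η] :
    IsMarkovKernel (midKernel κ η) where
  isProbabilityMeasure a := by rw [midKernel_apply]; infer_instance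

end Midpoint

section JensenShannon

variable {α β : Type*} [MeasurableSpace α] [MeasurableSpace β]

lemma klDiv_eq_informationTheory_klDiv {μ ν : Measure α} (h : μ Set.univ = ν Set.univ) :
    klDiv μ ν = InformationTheory.klDiv μ ν := by
  rw [klDiv, InformationTheory.klDiv_def, measureReal_def, measureReal_def, h]
  simp only [add_sub_cancel_right]

lemma jsDiv_comm (μ ν : Measure α) : jsDiv μ ν = jsDiv ν μ := by
  rw [jsDiv, jsDiv, add_comm μ, add_comm (klDiv μ _)]

section Probability

variable (μ ν : Measure α) [IsProbabilityMeasure μ] [IsProbabilityMeasure ν]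

lemma jsDiv_eq_klDiv_midMeasure :
    jsDiv μ ν = (InformationTheory.klDiv μ (midMeasure μ ν) +
      InformationTheory.klDiv ν (midMeasure μ ν)) / 2 := by
  have h (τ : Measure α) [IsProbabilityMeasure τ] :
      klDiv τ (midMeasure μ ν) = InformationTheory.klDiv τ (midMeasure μ ν) :=
    klDiv_eq_informationTheory_klDiv (by rw [measure_univ, measure_univ])
  rw [← h μ, ← h ν, jsDiv, midMeasure]

lemma klDiv_midMeasure_le_two_mul_jsDiv :
    InformationTheory.klDiv μ (midMeasure μ ν) ≤ 2 * jsDiv μ ν := by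
  rw [jsDiv_eq_klDiv_midMeasure, ENNReal.mul_div_cancel two_ne_zero ENNReal.ofNat_ne_top]
  exact le_self_add

lemma jsDiv_le_log_two : jsDiv μ ν ≤ ENNReal.ofReal (Real.log 2) := by
  have hμ := klDiv_le_log_of_le_smul ENNReal.ofNat_ne_top (le_two_smul_midMeasure_left μ ν)
  have hν := klDiv_le_log_of_le_smul ENNReal.ofNat_ne_top (le_two_smul_midMeasure_left ν μ)
  rw [midMeasure_comm ν μ] at hν
  rw [jsDiv_eq_klDiv_midMeasure]
  refine ENNReal.div_le_of_le_mul ?_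
  rw [mul_two]
  exact add_le_add hμ hν

lemma jsDiv_ne_top : jsDiv μ ν ≠ ∞ :=
  ne_top_of_le_ne_top ENNReal.ofReal_ne_top (jsDiv_le_log_two μ ν)

lemma jsDiv_map_le {f : α → β} (hf : Measurable f) :
    jsDiv (μ.map f) (ν.map f) ≤ jsDiv μ ν := by
  have := Measure.isProbabilityMeasure_map (μ := μ) hf.aemeasurable
  have := Measure.isProbabilityMeasure_map (μ := ν) hf.aemeasurable
  rw [jsDiv_eq_klDiv_midMeasure, jsDiv_eq_klDiv_midMeasure, ← map_midMeasure μ ν hf]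
  gcongr <;> exact InformationTheory.klDiv_map_le _ _ hf

lemma klDiv_add_klDiv_div_two_eq (ρ : Measure α) [IsFiniteMeasure ρ] :
    (InformationTheory.klDiv μ ρ + InformationTheory.klDiv ν ρ) / 2 =
      InformationTheory.klDiv (midMeasure μ ν) ρ + jsDiv μ ν := by
  have h := lintegral_klDiv_eq_klDiv_comp_add (midMeasure (.dirac false) (.dirac true))
    (Kernel.boolKernel μ ν) ρ
  simpa only [boolKernel_comp_midMeasure_dirac, lintegral_midMeasure, lintegral_dirac,
    Kernel.boolKernel_false, Kernel.boolKernel_true, ← jsDiv_eq_klDiv_midMeasure] using h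

end Probability

section Kernel

variable (κ η : Kernel α β) [IsMarkovKernel κ] [IsMarkovKernel η]

lemma lintegral_jsDiv_ne_top (p : Measure α) [IsFiniteMeasure p] :
    ∫⁻ a, jsDiv (κ a) (η a) ∂p ≠ ∞ := by
  refine ne_top_of_le_ne_top ?_ (lintegral_mono fun a ↦ jsDiv_le_log_two (κ a) (η a))
  rw [lintegral_const]
  exact ENNReal.mul_ne_top ENNReal.ofReal_ne_top (measure_ne_top p _)

variable [MeasurableSpace.CountableOrCountablyGenerated α β] (p q : Measure α)

lemma klDiv_compProd_midKernel_le [IsFiniteMeasure p] [IsFiniteMeasure q] :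
    InformationTheory.klDiv (p ⊗ₘ κ) (q ⊗ₘ midKernel κ η) ≤
      InformationTheory.klDiv p q + 2 * ∫⁻ a, jsDiv (κ a) (η a) ∂p := by
  rw [InformationTheory.klDiv_compProd_eq_add, klDiv_compProd_right,
    ← lintegral_const_mul' _ _ ENNReal.ofNat_ne_top]
  gcongr with a
  exact klDiv_midMeasure_le_two_mul_jsDiv (κ a) (η a)

theorem jsDiv_compProd_le [IsProbabilityMeasure p] [IsProbabilityMeasure q] :
    jsDiv (p ⊗ₘ κ) (q ⊗ₘ η) ≤
      ∫⁻ a, jsDiv (κ a) (η a) ∂p + ∫⁻ a, jsDiv (κ a) (η a) ∂q + jsDiv p q := by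
  set m := midMeasure p q
  set ρ := m ⊗ₘ midKernel κ η
  have hp : InformationTheory.klDiv (p ⊗ₘ κ) ρ ≤
      InformationTheory.klDiv p m + 2 * ∫⁻ a, jsDiv (κ a) (η a) ∂p :=
    klDiv_compProd_midKernel_le κ η p m
  have hq : InformationTheory.klDiv (q ⊗ₘ η) ρ ≤
      InformationTheory.klDiv q m + 2 * ∫⁻ a, jsDiv (κ a) (η a) ∂q := by
    simpa only [midKernel_comm η κ, jsDiv_comm (η _)] using klDiv_compProd_midKernel_le η κ q m
  calc jsDiv (p ⊗ₘ κ) (q ⊗ₘ η)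
    _ ≤ (InformationTheory.klDiv (p ⊗ₘ κ) ρ + InformationTheory.klDiv (q ⊗ₘ η) ρ) / 2 := by
        rw [klDiv_add_klDiv_div_two_eq]
        exact le_add_self
    _ ≤ ((InformationTheory.klDiv p m + 2 * ∫⁻ a, jsDiv (κ a) (η a) ∂p) +
          (InformationTheory.klDiv q m + 2 * ∫⁻ a, jsDiv (κ a) (η a) ∂q)) / 2 := by gcongr
    _ = (2 * (∫⁻ a, jsDiv (κ a) (η a) ∂p + ∫⁻ a, jsDiv (κ a) (η a) ∂q)) / 2 +
          (InformationTheory.klDiv p m + InformationTheory.klDiv q m) / 2 := by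
        rw [← ENNReal.add_div]
        ring_nf
    _ = ∫⁻ a, jsDiv (κ a) (η a) ∂p + ∫⁻ a, jsDiv (κ a) (η a) ∂q + jsDiv p q := by
        rw [mul_comm, ENNReal.mul_div_cancel_right two_ne_zero ENNReal.ofNat_ne_top,
          ← jsDiv_eq_klDiv_midMeasure]

end Kernel

end JensenShannon

section Disintegration

variable {X Y : Type*} [MeasurableSpace X] [MeasurableSpace Y]

lemma eq_map_swap_compProd (P : Measure (X × Y)) [IsFiniteMeasure P] (κ : Kernel Y X)
    [IsSFiniteKernel κ]
    (hκ : ∀ (A : Set X) (B : Set Y), MeasurableSet A → MeasurableSet B →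
      P (A ×ˢ B) = ∫⁻ y in B, κ y A ∂(P.map Prod.snd)) :
    P = (P.map Prod.snd ⊗ₘ κ).map Prod.swap := by
  refine Measure.ext_prod fun {A B} hA hB ↦ ?_
  rw [Measure.map_apply measurable_swap (hA.prod hB), Set.preimage_swap_prod,
    Measure.compProd_apply_prod hB hA, hκ A B hA hB]

theorem sqrt_jsDiv_le_general [MeasurableSpace.CountableOrCountablyGenerated Y X]
    (P Q : Measure (X × Y)) [IsProbabilityMeasure P] [IsProbabilityMeasure Q]
    (κP κQ : Kernel Y X) [IsMarkovKernel κP] [IsMarkovKernel κQ]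
    (hκP : ∀ (A : Set X) (B : Set Y), MeasurableSet A → MeasurableSet B →
      P (A ×ˢ B) = ∫⁻ y in B, κP y A ∂(P.map Prod.snd))
    (hκQ : ∀ (A : Set X) (B : Set Y), MeasurableSet A → MeasurableSet B →
      Q (A ×ˢ B) = ∫⁻ y in B, κQ y A ∂(Q.map Prod.snd)) :
    √(jsDiv P Q).toReal ≤
      √(∫⁻ y, jsDiv (κP y) (κQ y) ∂(P.map Prod.snd)
          + ∫⁻ y, jsDiv (κP y) (κQ y) ∂(Q.map Prod.snd)).toReal
        + √(jsDiv (P.map Prod.snd) (Q.map Prod.snd)).toReal := by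
  set p := P.map Prod.snd
  set q := Q.map Prod.snd
  have : IsProbabilityMeasure p := Measure.isProbabilityMeasure_map measurable_snd.aemeasurable
  have : IsProbabilityMeasure q := Measure.isProbabilityMeasure_map measurable_snd.aemeasurable
  have hdecomp : jsDiv P Q ≤
      ∫⁻ y, jsDiv (κP y) (κQ y) ∂p + ∫⁻ y, jsDiv (κP y) (κQ y) ∂q + jsDiv p q :=
    calc jsDiv P Q = jsDiv ((p ⊗ₘ κP).map Prod.swap) ((q ⊗ₘ κQ).map Prod.swap) := by
          rw [← eq_map_swap_compProd P κP hκP, ← eq_map_swap_compProd Q κQ hκQ]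
      _ ≤ jsDiv (p ⊗ₘ κP) (q ⊗ₘ κQ) := jsDiv_map_le _ _ measurable_swap
      _ ≤ _ := jsDiv_compProd_le κP κQ p q
  have hcond : ∫⁻ y, jsDiv (κP y) (κQ y) ∂p + ∫⁻ y, jsDiv (κP y) (κQ y) ∂q ≠ ∞ :=
    ENNReal.add_ne_top.2 ⟨lintegral_jsDiv_ne_top κP κQ p, lintegral_jsDiv_ne_top κP κQ q⟩
  have hreal := ENNReal.toReal_mono (ENNReal.add_ne_top.2 ⟨hcond, jsDiv_ne_top p q⟩) hdecomp
  rw [ENNReal.toReal_add hcond (jsDiv_ne_top p q)] at hreal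
  exact (Real.sqrt_le_sqrt hreal).trans (sqrt_add_le_sqrt_add_sqrt _ _)

end Disintegration

/-- Concluding inequality of Corollary 1: for probability measures `P`, `Q` on a
product `X × Y` of standard Borel spaces, with `Y`-marginals `P_Y`, `Q_Y` and
conditional distributions (disintegrations) `κP`, `κQ` of `X` given `y`,
`√(D_JS(P‖Q)) ≤ √(E_{y∼P_Y} D_JS(P(·|y)‖Q(·|y)) + E_{y∼Q_Y} D_JS(P(·|y)‖Q(·|y)))
  + √(D_JS(P_Y‖Q_Y))`. -/
theorem sqrt_jsDiv_le
    {X Y : Type*} [MeasurableSpace X] [MeasurableSpace Y]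
    [StandardBorelSpace X] [StandardBorelSpace Y]
    (P Q : Measure (X × Y)) [IsProbabilityMeasure P] [IsProbabilityMeasure Q]
    (κP κQ : Kernel Y X) [IsMarkovKernel κP] [IsMarkovKernel κQ]
    (hκP : ∀ (A : Set X) (B : Set Y), MeasurableSet A → MeasurableSet B →
      P (A ×ˢ B) = ∫⁻ y in B, κP y A ∂(P.map Prod.snd))
    (hκQ : ∀ (A : Set X) (B : Set Y), MeasurableSet A → MeasurableSet B →
      Q (A ×ˢ B) = ∫⁻ y in B, κQ y A ∂(Q.map Prod.snd)) :
    Real.sqrt (jsDiv P Q).toReal ≤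
      Real.sqrt ((∫⁻ y, jsDiv (κP y) (κQ y) ∂(P.map Prod.snd)
          + ∫⁻ y, jsDiv (κP y) (κQ y) ∂(Q.map Prod.snd)).toReal)
        + Real.sqrt (jsDiv (P.map Prod.snd) (Q.map Prod.snd)).toReal :=
  sqrt_jsDiv_le_general P Q κP κQ hκP hκQ
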